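/- arXiv:1306.4141 — 5 statements merged into one kernel-verified Lean document; each statement's English description precedes it below -/
import Mathlib

section
/- Let n ≥ 1 and k ≥ 1, let y_1, …, y_k be pairwise distinct complex numbers, and let λ_1, …, λ_k be partitions of n, where λ_i has p_i parts. Then the following are equivalent: (i) there exists a monic polynomial T ∈ ℂ[X] of degree n such that for each i = 1, …, k the multiset of multiplicities of the distinct complex roots of T − y_i equals the multiset of parts of λ_i, and every complex root of the derivative T′ is a root of the product ∏_{i=1}^k (T − y_i) (i.e., every finite critical value of T lies in {y_1, …, y_k}); (ii) Σ_{i=1}^k p_i = (k − 1)·n + 1 (equivalently, Σ_{i=1}^k (n − p_i) = n − 1). -/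
open Polynomial

lemma exists_nonzero_zero {σ ι : Type} [Fintype σ] [Fintype ι] (hc : Fintype.card ι < Fintype.card σ)
    (f : ι → MvPolynomial σ ℂ) (h0 : ∀ i, MvPolynomial.eval 0 (f i) = 0) :
    ∃ x : σ → ℂ, x ≠ 0 ∧ ∀ i, MvPolynomial.eval x (f i) = 0 := by
  classical
  by_contra hcon
  push Not at hcon
  have key : ∀ M : Ideal (MvPolynomial σ ℂ), M.IsMaximal → M.height ≤ Fintype.card ι := by
    intro M hM
    obtain ⟨x, rfl⟩ := MvPolynomial.isMaximal_iff_eq_vanishingIdeal_singleton.1 hM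
    let g : ι → MvPolynomial σ ℂ := fun i =>
      MvPolynomial.aeval (fun s => MvPolynomial.X s - MvPolynomial.C (x s)) (f i)
    have hg : ∀ z i, MvPolynomial.aeval z (g i) = MvPolynomial.eval (z - x) (f i) := by
      intro z i
      simp only [g]
      rw [← AlgHom.comp_apply, MvPolynomial.comp_aeval]
      have e : (fun s => (MvPolynomial.aeval z) (MvPolynomial.X s - MvPolynomial.C (x s) :
          MvPolynomial σ ℂ)) = z - x := by
        funext s; simp
      rw [e]
      rfl
    have hz : MvPolynomial.zeroLocus ℂ (Ideal.span (Set.range g)) = {x} := by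
      rw [MvPolynomial.zeroLocus_span]
      ext z
      simp only [Set.mem_range, forall_exists_index, forall_apply_eq_imp_iff, hg,
        Set.mem_ofPred_eq, Set.mem_singleton_iff]
      constructor
      · intro h
        by_contra hzx
        obtain ⟨i, hi⟩ := hcon (z - x) (sub_ne_zero.2 hzx)
        exact hi (h i)
      · rintro rfl i
        simpa using h0 i
    have hr := MvPolynomial.vanishingIdeal_zeroLocus_eq_radical (K := ℂ) (Ideal.span (Set.range g))
    rw [hz] at hr
    have hmem : MvPolynomial.vanishingIdeal ℂ {x} ∈ (Ideal.span (Set.range g)).minimalPrimes := by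
      rw [← Ideal.radical_minimalPrimes, ← hr, Ideal.minimalPrimes_eq_subsingleton_self]
      rfl
    have := Ideal.height_le_card_of_mem_minimalPrimes_span (Set.finite_range g) hmem
    refine this.trans ?_
    have h2 : (Set.range g).ncard ≤ Fintype.card ι := by
      rw [← Set.image_univ]
      refine (Set.ncard_image_le Set.finite_univ).trans ?_
      simp [Set.ncard_univ]
    exact_mod_cast h2
  have hd := MvPolynomial.ringKrullDim_of_isNoetherianRing (R := ℂ) (ι := σ)
  rw [← Ideal.sup_isMaximal_height_eq_ringKrullDim, ringKrullDim_eq_zero_of_field] at hd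
  have h3 : (⨆ I : Ideal (MvPolynomial σ ℂ), ⨆ _ : I.IsMaximal, I.height) ≤ Fintype.card ι :=
    iSup₂_le key
  have h4 : (((⨆ I : Ideal (MvPolynomial σ ℂ), ⨆ _ : I.IsMaximal, I.height) : ℕ∞) : WithBot ℕ∞) = ((Fintype.card σ : ℕ∞) : WithBot ℕ∞) := by
    rw [hd]; simp
  rw [WithBot.coe_inj] at h4
  rw [h4] at h3
  have : Fintype.card σ ≤ Fintype.card ι := by exact_mod_cast h3
  omega

lemma RH {k : ℕ} (T : ℂ[X]) (n : ℕ) (hn : 1 ≤ n) (hdeg : T.natDegree = n) (y : Fin k → ℂ)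
    (hy : Function.Injective y)
    (hc : ∀ x : ℂ, (derivative T).eval x = 0 → ∃ i, T.eval x = y i) :
    ∑ i, (T - C (y i)).roots.toFinset.card + n = k * n + 1 := by
  classical
  have hT' : (derivative T).natDegree = n - 1 := by
    rw [natDegree_derivative, hdeg]
  have hT0 : derivative T ≠ 0 := by
    intro h
    have := derivative_eq_zero.1 h
    omega
  have hP : ∀ i, (T - C (y i)).natDegree = n := fun i => by rw [natDegree_sub_C, hdeg]
  have hP0 : ∀ i, T - C (y i) ≠ 0 := fun i h => by
    have := hP i; rw [h] at this; simp at this; omega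
  have hroot : ∀ i x, x ∈ (T - C (y i)).roots.toFinset ↔ T.eval x = y i := by
    intro i x
    simp [hP0 i, sub_eq_zero]
  have h1 : ∑ x ∈ (derivative T).roots.toFinset, (derivative T).roots.count x = n - 1 := by
    rw [Multiset.toFinset_sum_count_eq, ← hT']
    exact (IsAlgClosed.splits _).natDegree_eq_card_roots.symm
  have h2 : ∑ x ∈ (Finset.univ : Finset (Fin k)).biUnion (fun i => (T - C (y i)).roots.toFinset),
      (derivative T).roots.count x = n - 1 := by
    rw [← h1]
    symm
    apply Finset.sum_subset
    · intro x hx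
      simp only [Multiset.mem_toFinset, mem_roots hT0, IsRoot.def] at hx
      obtain ⟨i, hi⟩ := hc x hx
      rw [Finset.mem_biUnion]
      exact ⟨i, Finset.mem_univ _, (hroot i x).2 hi⟩
    · intro x _ hx
      rwa [Multiset.mem_toFinset, ← Multiset.count_eq_zero] at hx
  rw [Finset.sum_biUnion] at h2
  swap
  · intro i _ j _ hij
    rw [Function.onFun, Finset.disjoint_left]
    intro x hx hx'
    rw [hroot] at hx hx'
    exact hij (hy (hx.symm.trans hx'))
  have h3 : ∀ i, ∑ x ∈ (T - C (y i)).roots.toFinset, (derivative T).roots.count x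
      + (T - C (y i)).roots.toFinset.card = n := by
    intro i
    rw [Finset.card_eq_sum_ones, ← Finset.sum_add_distrib]
    have : ∑ x ∈ (T - C (y i)).roots.toFinset, (T - C (y i)).roots.count x = n := by
      rw [Multiset.toFinset_sum_count_eq, ← hP i]
      exact (IsAlgClosed.splits _).natDegree_eq_card_roots.symm
    rw [← this]
    apply Finset.sum_congr rfl
    intro x hx
    have hx2 := hx
    rw [Multiset.mem_toFinset] at hx
    have hpos := Multiset.count_pos.2 hx
    have hd : derivative T = derivative (T - C (y i)) := by simp
    have := derivative_rootMultiplicity_of_root ((mem_roots (hP0 i)).1 hx)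
    rw [count_roots] at hpos ⊢
    rw [count_roots, hd, this]
    omega
  have h4 : ∑ i, (∑ x ∈ (T - C (y i)).roots.toFinset, (derivative T).roots.count x
      + (T - C (y i)).roots.toFinset.card) = k * n := by
    rw [Finset.sum_congr rfl (fun i _ => h3 i)]; simp
  rw [Finset.sum_add_distrib, h2] at h4
  omega


section aux
variable {A : Type*} [CommRing A] {k : ℕ} {p : Fin k → ℕ}

noncomputable def PP (l : ∀ i, Fin (p i) → ℕ) (a : (Σ i, Fin (p i)) → A) (i : Fin k) : A[X] :=
  ∏ j, (X - C (a ⟨i, j⟩)) ^ (l i j)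
noncomputable def DD (l : ∀ i, Fin (p i) → ℕ) (a : (Σ i, Fin (p i)) → A) (i : Fin k) : A[X] :=
  ∏ j, (X - C (a ⟨i, j⟩)) ^ (l i j - 1)
noncomputable def SS (l : ∀ i, Fin (p i) → ℕ) (a : (Σ i, Fin (p i)) → A) (i : Fin k) : A[X] :=
  ∑ j, (l i j : A[X]) * ∏ j' ∈ Finset.univ.erase j, (X - C (a ⟨i, j'⟩))
noncomputable def RR (n : ℕ) (l : ∀ i, Fin (p i) → ℕ) (a : (Σ i, Fin (p i)) → A) (i : Fin k) : A[X] :=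
  (n : A[X]) * ∏ i' ∈ Finset.univ.erase i, DD l a i'

variable (l : ∀ i, Fin (p i) → ℕ) (a : (Σ i, Fin (p i)) → A)

lemma PP_map {B : Type*} [CommRing B] (φ : A →+* B) (i : Fin k) :
    (PP l a i).map φ = PP l (fun s => φ (a s)) i := by
  simp [PP, Polynomial.map_prod]
lemma DD_map {B : Type*} [CommRing B] (φ : A →+* B) (i : Fin k) :
    (DD l a i).map φ = DD l (fun s => φ (a s)) i := by
  simp [DD, Polynomial.map_prod]
lemma SS_map {B : Type*} [CommRing B] (φ : A →+* B) (i : Fin k) :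
    (SS l a i).map φ = SS l (fun s => φ (a s)) i := by
  simp [SS, Polynomial.map_prod, Polynomial.map_sum]
lemma RR_map {B : Type*} [CommRing B] (n : ℕ) (φ : A →+* B) (i : Fin k) :
    (RR n l a i).map φ = RR n l (fun s => φ (a s)) i := by
  simp [RR, Polynomial.map_prod, DD_map]

lemma PP_deriv (hl : ∀ i j, 0 < l i j) (i : Fin k) :
    derivative (PP l a i) = DD l a i * SS l a i := by
  unfold PP SS DD
  rw [Polynomial.derivative_prod_finset, Finset.mul_sum]
  apply Finset.sum_congr rfl
  intro j _
  rw [← Finset.mul_prod_erase Finset.univ (fun j => (X - C (a ⟨i, j⟩)) ^ (l i j - 1))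
    (Finset.mem_univ j)]
  have : ∏ j' ∈ Finset.univ.erase j, (X - C (a ⟨i, j'⟩)) ^ (l i j') =
     (∏ j' ∈ Finset.univ.erase j, (X - C (a ⟨i, j'⟩)) ^ (l i j' - 1)) *
      ∏ j' ∈ Finset.univ.erase j, (X - C (a ⟨i, j'⟩)) := by
    rw [← Finset.prod_mul_distrib]
    apply Finset.prod_congr rfl
    intro j' _
    rw [← pow_succ, Nat.sub_add_cancel (hl i j')]
  rw [this, derivative_X_sub_C_pow]
  simp only [map_natCast]
  ring

lemma PP_monic (i : Fin k) : (PP l a i).Monic :=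
  monic_prod_of_monic _ _ fun _ _ => (monic_X_sub_C _).pow _
lemma DD_monic (i : Fin k) : (DD l a i).Monic :=
  monic_prod_of_monic _ _ fun _ _ => (monic_X_sub_C _).pow _
lemma PP_deg [Nontrivial A] (i : Fin k) : (PP l a i).natDegree = ∑ j, l i j := by
  unfold PP
  rw [natDegree_prod_of_monic _ _ fun _ _ => (monic_X_sub_C _).pow _]
  simp [(monic_X_sub_C _).natDegree_pow]
lemma DD_deg [Nontrivial A] (i : Fin k) : (DD l a i).natDegree = ∑ j, (l i j - 1) := by
  unfold DD
  rw [natDegree_prod_of_monic _ _ fun _ _ => (monic_X_sub_C _).pow _]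
  simp [(monic_X_sub_C _).natDegree_pow]

lemma monic_coeff_top {q : A[X]} {d : ℕ} [Nontrivial A] (hq : q.Monic) (hd : q.natDegree = d)
    (e : ℕ) (he : d ≤ e) : q.coeff e = if e = d then 1 else 0 := by
  split_ifs with h
  · rw [h, ← hd]; exact hq
  · exact coeff_eq_zero_of_natDegree_lt (by omega)

lemma RR_deg [Nontrivial A] (n : ℕ) (hl : ∀ i j, 0 < l i j) (hs : ∀ i, ∑ j, l i j = n)
    (hp : ∑ i, p i = (k - 1) * n + 1) (i : Fin k) :
    (∏ i' ∈ Finset.univ.erase i, DD l a i').natDegree = p i - 1 := by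
  have hD : ∀ i, (DD l a i).natDegree + p i = n := by
    intro i
    rw [DD_deg, ← hs i]
    have h1 : ∑ j : Fin (p i), (l i j - 1 + 1) = ∑ j, l i j :=
      Finset.sum_congr rfl fun j _ => Nat.sub_add_cancel (hl i j)
    rw [Finset.sum_add_distrib] at h1
    simpa using h1
  have hk : 1 ≤ k := by have := i.2; omega
  rw [natDegree_prod_of_monic _ _ fun _ _ => DD_monic _ _ _]
  have h1 : ∑ i', ((DD l a i').natDegree + p i') = k * n := by simp [hD]
  rw [Finset.sum_add_distrib, hp, ← Finset.add_sum_erase _ _ (Finset.mem_univ i)] at h1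
  have h2 := hD i
  obtain ⟨k', rfl⟩ : ∃ k', k = k' + 1 := ⟨k - 1, by omega⟩
  simp only [Nat.add_sub_cancel] at h1
  have h3 : (k' + 1) * n = k' * n + n := by ring
  omega

lemma SS_eq_RR [Nontrivial A] (n : ℕ) (hl : ∀ i j, 0 < l i j) (hs : ∀ i, ∑ j, l i j = n)
    (hp : ∑ i, p i = (k - 1) * n + 1) (i : Fin k)
    (h : ∀ e, e + 1 < p i → (SS l a i - RR n l a i).coeff e = 0) : SS l a i = RR n l a i := by
  rw [← sub_eq_zero]
  ext e
  rcases lt_or_ge (e + 1) (p i) with he | he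
  · simpa using h e he
  have hR := RR_deg l a n hl hs hp i
  have hRm : (∏ i' ∈ Finset.univ.erase i, DD l a i').Monic :=
    monic_prod_of_monic _ _ fun _ _ => DD_monic _ _ _
  have hSd : ∀ j, (∏ j' ∈ Finset.univ.erase j, (X - C (a ⟨i, j'⟩))).natDegree = p i - 1 := by
    intro j
    rw [natDegree_prod_of_monic _ _ fun _ _ => monic_X_sub_C _]
    simp
  have hSm : ∀ j, (∏ j' ∈ Finset.univ.erase j, (X - C (a ⟨i, j'⟩))).Monic := fun j =>
    monic_prod_of_monic _ _ fun _ _ => monic_X_sub_C _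
  rw [coeff_sub, SS, RR, finsetSum_coeff, coeff_natCast_mul, 
    monic_coeff_top hRm hR e (by omega)]
  simp only [coeff_natCast_mul]
  rw [Finset.sum_congr rfl fun j _ => by
    rw [monic_coeff_top (hSm j) (hSd j) e (by omega)]]
  rw [← Finset.sum_mul, ← hs i]
  simp

lemma RR_zero [Nontrivial A] (n : ℕ) (hl : ∀ i j, 0 < l i j) (hs : ∀ i, ∑ j, l i j = n)
    (hp : ∑ i, p i = (k - 1) * n + 1) (i : Fin k) :
    RR n l (fun _ => (0 : A)) i = (n : A[X]) * X ^ (p i - 1) := by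
  have h := RR_deg l (fun _ => (0 : A)) n hl hs hp i
  unfold RR
  have h2 : ∏ i' ∈ Finset.univ.erase i, DD l (fun _ => (0 : A)) i' =
      X ^ (∑ i' ∈ Finset.univ.erase i, ∑ j, (l i' j - 1)) := by
    simp [DD, Finset.prod_pow_eq_pow_sum]
  rw [h2, natDegree_X_pow] at h
  rw [h2, h]
lemma SS_zero (n : ℕ) (hs : ∀ i, ∑ j, l i j = n) (i : Fin k) :
    SS l (fun _ => (0 : A)) i = (n : A[X]) * X ^ (p i - 1) := by
  unfold SS
  simp [← Finset.sum_mul, ← hs i]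
lemma PP_zero (n : ℕ) (hs : ∀ i, ∑ j, l i j = n) (i : Fin k) :
    PP l (fun _ => (0 : A)) i = X ^ n := by
  unfold PP
  simp [Finset.prod_pow_eq_pow_sum, hs i]
end aux

lemma exists_system {n k : ℕ} (hn : 1 ≤ n) (y : Fin k → ℂ) {p : Fin k → ℕ}
    (l : ∀ i, Fin (p i) → ℕ) (hl : ∀ i j, 0 < l i j) (hs : ∀ i, ∑ j, l i j = n)
    (hp : ∑ i, p i = (k - 1) * n + 1) (i0 : Fin k) (j0 : Fin (p i0)) :
    ∃ (a : (Σ i, Fin (p i)) → ℂ) (t : ℂ), (t = 0 → ∃ s, a s ≠ 0) ∧ a ⟨i0, j0⟩ = 0 ∧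
      (∀ i, SS l a i = RR n l a i) ∧
      ∀ i, (PP l a i).coeff 0 + y i * t ^ n = (PP l a i0).coeff 0 + y i0 * t ^ n := by
  classical
  let σ := Option (Σ i, Fin (p i))
  let a' : (Σ i, Fin (p i)) → MvPolynomial σ ℂ := fun s => MvPolynomial.X (some s)
  let t' : MvPolynomial σ ℂ := MvPolynomial.X none
  let f : (Σ i, Fin (p i)) → MvPolynomial σ ℂ := fun s =>
    if (s.2 : ℕ) + 1 < p s.1 then (SS l a' s.1 - RR n l a' s.1).coeff s.2
    else if s.1 = i0 then a' ⟨i0, j0⟩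
    else ((PP l a' s.1).coeff 0 + MvPolynomial.C (y s.1) * t' ^ n) -
      ((PP l a' i0).coeff 0 + MvPolynomial.C (y i0) * t' ^ n)
  have hf : ∀ (x : σ → ℂ) s, MvPolynomial.eval x (f s) =
      if (s.2 : ℕ) + 1 < p s.1 then
        (SS l (fun s => x (some s)) s.1 - RR n l (fun s => x (some s)) s.1).coeff s.2
      else if s.1 = i0 then x (some ⟨i0, j0⟩)
      else ((PP l (fun s => x (some s)) s.1).coeff 0 + y s.1 * x none ^ n) -
      ((PP l (fun s => x (some s)) i0).coeff 0 + y i0 * x none ^ n) := by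
    intro x s
    have ha : (fun s => MvPolynomial.eval x (a' s)) = fun s => x (some s) := by
      funext s; simp [a']
    have h1 : ∀ i e, MvPolynomial.eval x ((PP l a' i).coeff e) =
        (PP l (fun s => x (some s)) i).coeff e := by
      intro i e
      rw [← coeff_map, PP_map, ha]
    have h2 : ∀ i e, MvPolynomial.eval x ((SS l a' i).coeff e) =
        (SS l (fun s => x (some s)) i).coeff e := by
      intro i e
      rw [← coeff_map, SS_map, ha]
    have h3 : ∀ i e, MvPolynomial.eval x ((RR n l a' i).coeff e) =
        (RR n l (fun s => x (some s)) i).coeff e := by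
      intro i e
      rw [← coeff_map, RR_map, ha]
    simp only [f]
    split_ifs
    · rw [coeff_sub, coeff_sub, map_sub, h2, h3]
    · simp [a']
    · simp only [map_sub, map_add, map_mul, map_pow, h1, t', MvPolynomial.eval_C,
        MvPolynomial.eval_X]
  obtain ⟨x, hx0, hx⟩ := exists_nonzero_zero (σ := σ) (ι := Σ i, Fin (p i))
    (by simp [σ]) f (by
      intro s
      rw [hf]
      split_ifs with h1 h2
      · simp only [Pi.zero_apply]
        rw [RR_zero l n hl hs hp, SS_zero l n hs]
        simp
      · rfl
      · simp only [Pi.zero_apply]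
        rw [PP_zero l n hs, PP_zero l n hs]
        simp [show n ≠ 0 by omega])
  simp only [hf] at hx
  have hpp : ∀ i, 0 < p i := by
    intro i
    by_contra h
    have h1 := hs i
    have : IsEmpty (Fin (p i)) := by
      rw [show p i = 0 by omega]; infer_instance
    simp at h1
    omega
  refine ⟨fun s => x (some s), x none, ?_, ?_, ?_, ?_⟩
  · intro ht
    by_contra hcon
    push Not at hcon
    apply hx0
    funext s
    rcases s with _ | s
    · exact ht
    · exact hcon s
  · have := hx ⟨i0, ⟨p i0 - 1, by have := hpp i0; omega⟩⟩
    have h := hpp i0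
    simpa [show ¬ (p i0 - 1 + 1 < p i0) by omega] using this
  · intro i
    apply SS_eq_RR l _ n hl hs hp
    intro e he
    have := hx ⟨i, ⟨e, by omega⟩⟩
    simpa [he] using this
  · intro i
    by_cases hi : i = i0
    · rw [hi]
    · have := hx ⟨i, ⟨p i - 1, by have := hpp i; omega⟩⟩
      have h := hpp i
      simp only [show ¬ (p i - 1 + 1 < p i) by omega, if_false, hi] at this
      exact sub_eq_zero.1 this

lemma exists_scaled {n k : ℕ} (hn : 1 ≤ n) (y : Fin k → ℂ) {p : Fin k → ℕ}
    (l : ∀ i, Fin (p i) → ℕ) (hl : ∀ i j, 0 < l i j) (hs : ∀ i, ∑ j, l i j = n)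
    (hp : ∑ i, p i = (k - 1) * n + 1) (i0 : Fin k) (j0 : Fin (p i0)) :
    ∃ (b : (Σ i, Fin (p i)) → ℂ) (T : ℂ[X]), (∀ i, T - C (y i) = PP l b i) ∧
      ∀ x : ℂ, (derivative T).eval x = 0 → ∃ i, T.eval x = y i := by
  classical
  obtain ⟨a, t, h1, h2, h3, h4⟩ := exists_system hn y l hl hs hp i0 j0
  have hder : ∀ i, derivative (PP l a i) = (n : ℂ[X]) * ∏ i', DD l a i' := by
    intro i
    rw [PP_deriv l a hl, h3, RR, ← Finset.mul_prod_erase _ _ (Finset.mem_univ i)]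
    ring
  have hT : ∀ i, PP l a i + C (y i * t ^ n) = PP l a i0 + C (y i0 * t ^ n) := by
    intro i
    rw [← sub_eq_zero]
    have hd : derivative (PP l a i + C (y i * t ^ n) - (PP l a i0 + C (y i0 * t ^ n))) = 0 := by
      rw [derivative_sub, derivative_add, derivative_add, hder, hder, derivative_C, derivative_C,
        sub_self]
    rw [eq_C_of_derivative_eq_zero hd]
    have := h4 i
    simp only [coeff_sub, coeff_add, coeff_C_zero]
    rw [this, sub_self, C_0]
  have hn0 : (n : ℂ) ≠ 0 := by exact_mod_cast (by omega : n ≠ 0)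
  have hroot : ∀ x, (derivative (PP l a i0)).eval x = 0 → ∃ i, (PP l a i).eval x = 0 := by
    intro x hx
    rw [hder] at hx
    simp only [eval_mul, eval_natCast, mul_eq_zero, hn0, false_or, eval_prod,
      Finset.prod_eq_zero_iff, Finset.mem_univ, true_and, DD] at hx
    obtain ⟨i, j, hj⟩ := hx
    refine ⟨i, ?_⟩
    simp only [PP, eval_prod, Finset.prod_eq_zero_iff, Finset.mem_univ, true_and]
    refine ⟨j, ?_⟩
    rw [eval_pow] at hj ⊢
    have := eq_zero_of_pow_eq_zero hj
    rw [this, zero_pow (by have := hl i j; omega)]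
  have hProot : ∀ i j, (PP l a i).eval (a ⟨i, j⟩) = 0 := by
    intro i j
    simp only [PP, eval_prod, Finset.prod_eq_zero_iff, Finset.mem_univ, true_and]
    exact ⟨j, by simp [show l i j ≠ 0 by have := hl i j; omega]⟩
  have ht : t ≠ 0 := by
    intro ht
    obtain ⟨⟨i, j⟩, hsne⟩ := h1 ht
    have hT' : ∀ i, PP l a i = PP l a i0 := by
      intro i
      have := hT i
      simpa [ht, show n ≠ 0 by omega] using this
    have hrh := RH (k := 1) (PP l a i0) n hn (by rw [PP_deg, hs]) (fun _ => 0)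
      (fun _ _ _ => Subsingleton.elim _ _) (by
        intro x hx
        obtain ⟨i, hi⟩ := hroot x hx
        exact ⟨0, by rw [← hT' i, hi]⟩)
    simp only [C_0, sub_zero, Finset.univ_unique, Finset.sum_const, Finset.card_singleton,
      one_smul, one_mul] at hrh
    have hcard : (PP l a i0).roots.toFinset.card ≤ 1 := by omega
    rw [Finset.card_le_one] at hcard
    have hm : ∀ i j, a ⟨i, j⟩ ∈ (PP l a i0).roots.toFinset := by
      intro i j
      rw [Multiset.mem_toFinset, mem_roots (PP_monic l a i0).ne_zero, IsRoot.def, ← hT' i]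
      exact hProot i j
    exact hsne ((hcard _ (hm i j) _ (hm i0 j0)).trans h2)
  have hsc : ∀ i, C (t ^ n)⁻¹ * (PP l a i).comp (C t * X) = PP l (fun s => a s / t) i := by
    intro i
    have : ∀ j, (C t * X - C (a ⟨i, j⟩)) ^ (l i j) =
        C t ^ (l i j) * (X - C (a ⟨i, j⟩ / t)) ^ (l i j) := by
      intro j
      rw [← mul_pow, mul_sub, ← C_mul, mul_div_cancel₀ _ ht]
    simp only [PP, prod_comp, pow_comp, sub_comp, X_comp, C_comp, this, Finset.prod_mul_distrib]
    rw [Finset.prod_pow_eq_pow_sum, hs, ← mul_assoc, ← C_pow, ← C_mul,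
      inv_mul_cancel₀ (pow_ne_zero _ ht), C_1, one_mul]
  have htn : t ^ n ≠ 0 := pow_ne_zero _ ht
  have hTT : ∀ i, C (t ^ n)⁻¹ * (PP l a i0 + C (y i0 * t ^ n)).comp (C t * X) =
      PP l (fun s => a s / t) i + C (y i) := by
    intro i
    rw [← hT i, add_comp, mul_add, hsc, C_comp, ← C_mul]
    congr 2
    field_simp
  refine ⟨fun s => a s / t, C (t ^ n)⁻¹ * (PP l a i0 + C (y i0 * t ^ n)).comp (C t * X), ?_, ?_⟩
  · intro i
    rw [hTT i, add_sub_cancel_right]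
  · intro x hx
    have hx' : (derivative (PP l a i0)).eval (t * x) = 0 := by
      rw [derivative_C_mul, derivative_comp, derivative_add, derivative_C, add_zero] at hx
      simpa [htn, ht, show n ≠ 0 by omega] using hx
    obtain ⟨i, hi⟩ := hroot _ hx'
    refine ⟨i, ?_⟩
    rw [hTT i, ← hsc i]
    simp [hi]

lemma finish {m : ℕ} (l : Fin m → ℕ) (hl : ∀ j, 0 < l j) (b : Fin m → ℂ)
    (P : ℂ[X]) (hP : P = ∏ j, (X - C (b j)) ^ (l j)) :
    P.roots.toFinset = Finset.univ.image b ∧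
    (Function.Injective b → (P.roots.dedup).map (fun z => P.roots.count z) =
      Finset.univ.val.map l) := by
  classical
  have hP0 : P ≠ 0 := by
    rw [hP]; exact (monic_prod_of_monic _ _ fun _ _ => (monic_X_sub_C _).pow _).ne_zero
  have hfs : P.roots.toFinset = Finset.univ.image b := by
    ext x
    rw [Multiset.mem_toFinset, mem_roots hP0, IsRoot.def, hP]
    simp only [eval_prod, Finset.prod_eq_zero_iff, Finset.mem_univ, true_and, Finset.mem_image,
      eval_pow, eval_sub, eval_X, eval_C]
    constructor
    · rintro ⟨j, hj⟩
      exact ⟨j, (sub_eq_zero.1 (eq_zero_of_pow_eq_zero hj)).symm⟩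
    · rintro ⟨j, rfl⟩
      exact ⟨j, by rw [sub_self, zero_pow (by have := hl j; omega)]⟩
  refine ⟨hfs, fun hb => ?_⟩
  have hr : P.roots = ∑ j, l j • ({b j} : Multiset ℂ) := by
    rw [hP, roots_prod _ _ (hP ▸ hP0), Multiset.bind]
    simp [Multiset.join, Finset.sum]
  have hc : ∀ j, P.roots.count (b j) = l j := by
    intro j
    rw [hr, Multiset.count_sum']
    simp only [Multiset.count_nsmul, Multiset.count_singleton, hb.eq_iff]
    simp
  have : P.roots.dedup = Finset.univ.val.map b := by
    have h := congrArg Finset.val hfs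
    rw [Finset.image_val, Multiset.toFinset_val,
      Multiset.dedup_eq_self.2 (Finset.univ.nodup.map hb)] at h
    exact h
  rw [this, Multiset.map_map]
  exact Multiset.map_congr rfl fun j _ => hc j




/-- Thom's realizability theorem: there is a monic degree-`n` polynomial `T`
whose root multiplicities over each `y i` realize the partition `lam i` and
all of whose finite critical values lie among the `y i`, iff
`Σ p_i = (k - 1)·n + 1`. -/
theorem stmt9 (n k : ℕ) (hn : 1 ≤ n) (hk : 1 ≤ k)
    (y : Fin k → ℂ) (hy : Function.Injective y)
    (lam : Fin k → Multiset ℕ)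
    (hpos : ∀ i, ∀ x ∈ lam i, 0 < x)
    (hsum : ∀ i, (lam i).sum = n) :
    (∃ T : ℂ[X], T.Monic ∧ T.natDegree = n ∧
        (∀ i, ((T - C (y i)).roots.dedup).map
            (fun z => (T - C (y i)).roots.count z) = lam i) ∧
        (∀ x : ℂ, (derivative T).eval x = 0 → ∃ i, T.eval x = y i)) ↔
      ∑ i, (lam i).card = (k - 1) * n + 1 := by
  classical
  have hkn : (k - 1) * n + n = k * n := by
    obtain ⟨k', rfl⟩ : ∃ k', k = k' + 1 := ⟨k - 1, by omega⟩
    simp only [Nat.add_sub_cancel]; ring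
  constructor
  · rintro ⟨T, hm, hdeg, hT, hc⟩
    have h := RH T n hn hdeg y hy hc
    have h2 : ∀ i, (lam i).card = (T - C (y i)).roots.toFinset.card := by
      intro i
      rw [← hT i, Multiset.card_map]
      rfl
    simp only [h2]
    omega
  · intro hp
    have hex : ∀ i, ∃ l : Fin (lam i).card → ℕ, Finset.univ.val.map l = lam i := by
      intro i
      obtain ⟨L, hL⟩ : ∃ L : List ℕ, (L : Multiset ℕ) = lam i := Quotient.exists_rep (lam i)
      rw [← hL]
      change ∃ l : Fin L.length → ℕ, Finset.univ.val.map l = (L : Multiset ℕ)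
      refine ⟨L.get, ?_⟩
      rw [Fin.univ_val_map]
      simp
    choose l hlam using hex
    have hl : ∀ i j, 0 < l i j := by
      intro i j
      apply hpos i
      rw [← hlam i]
      exact Multiset.mem_map_of_mem _ (Finset.mem_univ_val j)
    have hs : ∀ i, ∑ j, l i j = n := by
      intro i
      rw [← hsum i]
      conv_rhs => rw [← hlam i]
      rfl
    let i0 : Fin k := ⟨0, by omega⟩
    have hp0 : 0 < (lam i0).card := by
      rw [Multiset.card_pos]
      intro h
      have := hsum i0
      rw [h] at this
      simp at this
      omega
    obtain ⟨b, T, hT, hc⟩ := exists_scaled hn y l hl hs hp i0 ⟨0, hp0⟩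
    have hTe : T = PP l b i0 + C (y i0) := by rw [← hT i0]; ring
    have hdeg : T.natDegree = n := by
      rw [hTe, natDegree_add_C, PP_deg, hs]
    have hmon : T.Monic := by
      rw [hTe]
      apply (PP_monic l b i0).add_of_left
      rw [degree_eq_natDegree (PP_monic l b i0).ne_zero, PP_deg, hs]
      exact lt_of_le_of_lt degree_C_le (by exact_mod_cast hn)
    have hrh := RH T n hn hdeg y hy hc
    have hle : ∀ i, (T - C (y i)).roots.toFinset.card ≤ (lam i).card := by
      intro i
      rw [(finish (l i) (hl i) (fun j => b ⟨i, j⟩) _ (hT i)).1]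
      exact Finset.card_image_le.trans (by simp)
    have heq : ∀ i, (T - C (y i)).roots.toFinset.card = (lam i).card := by
      have := (Finset.sum_eq_sum_iff_of_le (fun i (_ : i ∈ Finset.univ) => hle i)).1 (by omega)
      exact fun i => this i (Finset.mem_univ i)
    refine ⟨T, hmon, hdeg, ?_, hc⟩
    intro i
    obtain ⟨h1, h2⟩ := finish (l i) (hl i) (fun j => b ⟨i, j⟩) _ (hT i)
    rw [← hlam i]
    have hi : Function.Injective fun j => b ⟨i, j⟩ := by
      have := Finset.card_image_iff.1
        (show (Finset.univ.image fun j => b ⟨i, j⟩).card = Finset.univ.card by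
          rw [← h1, heq i]; simp)
      rwa [Finset.coe_univ, Set.injOn_univ] at this
    convert h2 hi
end

section
/- Let m ≥ 1 and d ≥ 1 be integers and let f, g ∈ ℂ[X] be monic polynomials of degree m with f ≠ g. Then deg(f^d − g^d) = deg(f − g) + (d − 1)·m. -/
open Polynomial

/-- For monic `f, g` of degree `m` with `f ≠ g`,
`deg (f^d - g^d) = deg (f - g) + (d - 1)·m`. -/
theorem stmt10 (m d : ℕ) (hm : 1 ≤ m) (hd : 1 ≤ d)
    (f g : ℂ[X]) (hf : f.Monic) (hg : g.Monic)
    (hfm : f.natDegree = m) (hgm : g.natDegree = m) (hne : f ≠ g) :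
    (f ^ d - g ^ d).natDegree = (f - g).natDegree + (d - 1) * m := by
  have key : ∀ i ∈ Finset.range d, (f ^ i * g ^ (d - 1 - i)).Monic ∧
      (f ^ i * g ^ (d - 1 - i)).natDegree = (d - 1) * m := by
    intro i hi
    have hi' := Finset.mem_range.mp hi
    refine ⟨(hf.pow i).mul (hg.pow _), ?_⟩
    rw [(hf.pow i).natDegree_mul (hg.pow _), hf.natDegree_pow, hg.natDegree_pow, hfm, hgm,
      ← add_mul]
    congr 1
    omega
  have hc : (∑ i ∈ Finset.range d, f ^ i * g ^ (d - 1 - i)).coeff ((d - 1) * m) = (d : ℂ) := by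
    rw [finset_sum_coeff, Finset.sum_congr rfl (g := fun _ => (1 : ℂ))]
    · simp
    · intro i hi
      rw [← (key i hi).2]
      exact (key i hi).1.coeff_natDegree
  have hd0 : (d : ℂ) ≠ 0 := by
    exact_mod_cast (by omega : d ≠ 0)
  have hS : (∑ i ∈ Finset.range d, f ^ i * g ^ (d - 1 - i)).natDegree = (d - 1) * m := by
    apply le_antisymm
    · exact natDegree_sum_le_of_forall_le _ _ (fun i hi => (key i hi).2.le)
    · exact le_natDegree_of_ne_zero (by rw [hc]; exact hd0)
  have hS0 : (∑ i ∈ Finset.range d, f ^ i * g ^ (d - 1 - i)) ≠ 0 := by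
    intro h
    rw [h, coeff_zero] at hc
    exact hd0 hc.symm
  rw [← (Commute.all f g).geom_sum₂_mul d, natDegree_mul hS0 (sub_ne_zero.mpr hne), hS, add_comm]
end

section
/- Define the sequence (a_n) of rational numbers by a_0 = 1 and, for n ≥ 1, a_n = Σ_{m=1}^{n} C(n−1, m−1)·Cat_m, where Cat_m = C(2m, m)/(m+1) is the m-th Catalan number. Let A = Σ_{n≥0} a_n tⁿ be the corresponding formal power series in ℚ[[t]]. Then (1 − t)·A = (1 − t) + t·A² in ℚ[[t]]. -/
theorem aux_eq (a : ℕ → ℚ) (ha0 : a 0 = 1)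
    (ha : ∀ n : ℕ, 1 ≤ n →
      a n = ∑ m ∈ Finset.Icc 1 n,
        (Nat.choose (n - 1) (m - 1) : ℚ) * ((Nat.choose (2 * m) m : ℚ) / (m + 1)))
    (hu : PowerSeries.HasSubst (PowerSeries.X * PowerSeries.mk 1 : PowerSeries ℚ)) :
    PowerSeries.subst (PowerSeries.X * PowerSeries.mk 1 : PowerSeries ℚ)
      (PowerSeries.map (Nat.castRingHom ℚ) PowerSeries.catalanSeries) = PowerSeries.mk a := by
  ext n
  rw [PowerSeries.coeff_subst' hu, PowerSeries.coeff_mk]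
  have hc : ∀ m : ℕ, (catalan m : ℚ) = (Nat.choose (2 * m) m : ℚ) / (m + 1) := by
    intro m
    have h := succ_mul_catalan_eq_centralBinom m
    rw [Nat.centralBinom_eq_two_mul_choose] at h
    have h' : ((m : ℚ) + 1) * catalan m = Nat.choose (2 * m) m := by exact_mod_cast h
    rw [← h']
    field_simp
  have hk : ∀ m : ℕ, PowerSeries.coeff n ((PowerSeries.X * PowerSeries.mk 1 : PowerSeries ℚ) ^ (m + 1))
      = if m + 1 ≤ n then (Nat.choose (n - 1) m : ℚ) else 0 := by
    intro m
    rw [mul_pow, PowerSeries.mk_one_pow_eq_mk_choose_add, PowerSeries.coeff_X_pow_mul']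
    split_ifs with h
    · rw [PowerSeries.coeff_mk]
      congr 2
      omega
    · rfl
  rcases Nat.eq_zero_or_pos n with rfl | hn
  · rw [finsum_eq_single _ 0]
    · simp [ha0]
    · intro m hm
      obtain ⟨k, rfl⟩ := Nat.exists_eq_succ_of_ne_zero hm
      rw [Nat.succ_eq_add_one, hk]
      simp
  · rw [ha n hn, finsum_eq_sum_of_support_subset (s := Finset.Icc 1 n)]
    · refine Finset.sum_congr rfl fun m hm => ?_
      rw [Finset.mem_Icc] at hm
      obtain ⟨k, rfl⟩ := Nat.exists_eq_succ_of_ne_zero (by omega : m ≠ 0)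
      rw [Nat.succ_eq_add_one, hk, if_pos hm.2, ← hc]
      simp [mul_comm]
    · intro m hm
      rw [Function.mem_support] at hm
      rw [Finset.mem_coe, Finset.mem_Icc]
      by_contra hcon
      apply hm
      rcases m with _ | k
      · simp [PowerSeries.coeff_one, hn.ne']
      · rw [hk, if_neg (by omega), smul_zero]

/-- Functional equation for the generating function of edge-rooted weighted
bicolored plane trees by total weight: `(1 - t)·A = (1 - t) + t·A²`. -/
theorem stmt11 (a : ℕ → ℚ) (ha0 : a 0 = 1)
    (ha : ∀ n : ℕ, 1 ≤ n →
      a n = ∑ m ∈ Finset.Icc 1 n,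
        (Nat.choose (n - 1) (m - 1) : ℚ) * ((Nat.choose (2 * m) m : ℚ) / (m + 1))) :
    (1 - PowerSeries.X) * PowerSeries.mk a
      = (1 - PowerSeries.X) + PowerSeries.X * (PowerSeries.mk a) ^ 2 := by
  have hu : PowerSeries.HasSubst (PowerSeries.X * PowerSeries.mk 1 : PowerSeries ℚ) :=
    PowerSeries.HasSubst.of_constantCoeff_zero' (by simp)
  have h1 := congrArg (PowerSeries.map (Nat.castRingHom ℚ))
    PowerSeries.catalanSeries_sq_mul_X_add_one
  have h2 := congrArg (PowerSeries.substAlgHom (R := ℚ) hu) h1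
  simp only [map_add, map_mul, map_pow, map_one, PowerSeries.map_X,
    PowerSeries.substAlgHom_X] at h2
  rw [PowerSeries.coe_substAlgHom, aux_eq a ha0 ha hu] at h2
  have h3 := PowerSeries.mk_one_mul_one_sub_eq_one ℚ
  linear_combination (-(1 - PowerSeries.X)) * h2 + PowerSeries.X * (PowerSeries.mk a) ^ 2 * h3
end

section
/- Define a_0 = 1 and, for n ≥ 1, a_n = Σ_{m=1}^{n} C(n−1, m−1)·Cat_m, where Cat_m = C(2m, m)/(m+1) is the m-th Catalan number. Then for every real number t with 0 < t < 1/5, the series Σ_{n≥0} a_n tⁿ converges and its sum equals (1 − t − √(1 − 6t + 5t²))/(2t). -/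
lemma cat_real (n : ℕ) : ((Nat.choose (2 * n) n : ℝ) / (n + 1)) = (catalan n : ℝ) := by
  have h := succ_mul_catalan_eq_centralBinom n
  rw [Nat.centralBinom] at h
  rw [← h]
  push_cast
  have : (n : ℝ) + 1 ≠ 0 := by positivity
  field_simp

lemma cat_partial (N : ℕ) : ∑ n ∈ Finset.range N, (catalan n : ℝ) * (1 / 4) ^ n
    = 2 - 2 * (Nat.centralBinom N : ℝ) * (1 / 4) ^ N := by
  induction N with
  | zero => simp
  | succ N ih =>
    rw [Finset.sum_range_succ, ih]
    have h1 : ((N : ℝ) + 1) * catalan N = Nat.centralBinom N := by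
      exact_mod_cast succ_mul_catalan_eq_centralBinom N
    have h2 : ((N : ℝ) + 1) * Nat.centralBinom (N + 1) = 2 * (2 * N + 1) * Nat.centralBinom N := by
      exact_mod_cast Nat.succ_mul_centralBinom_succ N
    have h3 : (Nat.centralBinom (N + 1) : ℝ) = 2 * (2 * N + 1) * catalan N := by
      have : (N : ℝ) + 1 ≠ 0 := by positivity
      apply mul_left_cancel₀ this
      rw [h2, ← h1]; ring
    rw [h3, ← h1, pow_succ]; ring

lemma cat_partial_le (x : ℝ) (hx0 : 0 ≤ x) (hx : x ≤ 1 / 4) (N : ℕ) :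
    ∑ n ∈ Finset.range N, (catalan n : ℝ) * x ^ n ≤ 2 := by
  calc ∑ n ∈ Finset.range N, (catalan n : ℝ) * x ^ n
      ≤ ∑ n ∈ Finset.range N, (catalan n : ℝ) * (1 / 4) ^ n := by gcongr
    _ ≤ 2 := by
      rw [cat_partial]
      have : 0 ≤ 2 * (Nat.centralBinom N : ℝ) * (1 / 4) ^ N := by positivity
      linarith

lemma cat_hasSum (x : ℝ) (hx0 : 0 < x) (hx : x < 1 / 4) :
    HasSum (fun n => (catalan n : ℝ) * x ^ n) ((1 - Real.sqrt (1 - 4 * x)) / (2 * x)) := by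
  have hnn : ∀ n, 0 ≤ (catalan n : ℝ) * x ^ n := fun n => by positivity
  have hs : Summable (fun n => (catalan n : ℝ) * x ^ n) :=
    summable_of_sum_range_le hnn (cat_partial_le x hx0.le hx.le)
  have hle : ∑' n, (catalan n : ℝ) * x ^ n ≤ 2 :=
    Real.tsum_le_of_sum_range_le hnn (cat_partial_le x hx0.le hx.le)
  have hq : ∑' n, (catalan n : ℝ) * x ^ n = 1 + x * (∑' n, (catalan n : ℝ) * x ^ n) ^ 2 := by
    have hn : Summable (fun n => ‖(catalan n : ℝ) * x ^ n‖) := hs.norm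
    rw [sq, tsum_mul_tsum_eq_tsum_sum_antidiagonal_of_summable_norm hn hn, ← tsum_mul_left,
      hs.tsum_eq_zero_add]
    congr 1
    · simp
    · apply tsum_congr
      intro n
      rw [catalan_succ', Nat.cast_sum, Finset.sum_mul, Finset.mul_sum]
      apply Finset.sum_congr rfl
      intro p hp
      rw [Finset.HasAntidiagonal.mem_antidiagonal] at hp
      rw [← hp, pow_succ, pow_add]
      push_cast; ring
  have := hs.hasSum
  set S := ∑' n, (catalan n : ℝ) * x ^ n
  have e : Real.sqrt (1 - 4 * x) = 1 - 2 * x * S := by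
    rw [Real.sqrt_eq_iff_mul_self_eq (by linarith) (by nlinarith)]
    nlinarith
  rw [e]
  convert this using 1
  field_simp
  ring

lemma choose_hasSum (k : ℕ) (t : ℝ) (ht0 : 0 < t) (ht : t < 1) :
    HasSum (fun j => (Nat.choose j k : ℝ) * t ^ (j + 1)) ((t / (1 - t)) ^ (k + 1)) := by
  have h := (hasSum_choose_mul_geometric_of_norm_lt_one k (r := t)
    (by rw [Real.norm_eq_abs, abs_of_pos ht0]; exact ht)).mul_left (t ^ (k + 1))
  rw [div_pow]
  rw [mul_one_div] at h
  rw [← (add_left_injective k).hasSum_iff]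
  · have e : ((fun j => (Nat.choose j k : ℝ) * t ^ (j + 1)) ∘ fun x => x + k)
        = fun i => t ^ (k + 1) * (((i + k).choose k : ℝ) * t ^ i) := by
      funext n
      simp only [Function.comp]
      ring
    rw [e]
    exact h
  · intro j hj
    have : j < k := by
      by_contra hc
      exact hj ⟨j - k, by simp; omega⟩
    simp [Nat.choose_eq_zero_of_lt this]

/-- Closed form of the generating function of edge-rooted weighted bicolored
plane trees: for `0 < t < 1/5`,
`Σ a_n tⁿ = (1 - t - √(1 - 6t + 5t²)) / (2t)`. -/
theorem stmt12 (a : ℕ → ℝ) (ha0 : a 0 = 1)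
    (ha : ∀ n : ℕ, 1 ≤ n →
      a n = ∑ m ∈ Finset.Icc 1 n,
        (Nat.choose (n - 1) (m - 1) : ℝ) * ((Nat.choose (2 * m) m : ℝ) / (m + 1)))
    (t : ℝ) (ht0 : 0 < t) (ht : t < 1 / 5) :
    HasSum (fun n => a n * t ^ n)
      ((1 - t - Real.sqrt (1 - 6 * t + 5 * t ^ 2)) / (2 * t)) := by
  have h1t : 0 < 1 - t := by linarith
  have hx0 : 0 < t / (1 - t) := by positivity
  have hx : t / (1 - t) < 1 / 4 := by rw [div_lt_div_iff₀ h1t (by norm_num)]; linarith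
  have hC := cat_hasSum _ hx0 hx
  have hval : (1 - Real.sqrt (1 - 4 * (t / (1 - t)))) / (2 * (t / (1 - t)))
      = (1 - t - Real.sqrt (1 - 6 * t + 5 * t ^ 2)) / (2 * t) := by
    have : Real.sqrt (1 - 6 * t + 5 * t ^ 2) = (1 - t) * Real.sqrt (1 - 4 * (t / (1 - t))) := by
      have e : 1 - 6 * t + 5 * t ^ 2 = (1 - t) ^ 2 * (1 - 4 * (t / (1 - t))) := by
        field_simp; ring
      rw [e, Real.sqrt_mul (by positivity), Real.sqrt_sq h1t.le]
    rw [this]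
    field_simp
  rw [hval] at hC
  rw [← hasSum_nat_add_iff' 1] at hC ⊢
  simp only [Finset.range_one, Finset.sum_singleton, catalan_zero, ha0, pow_zero, Nat.cast_one,
    mul_one] at hC ⊢
  set V := (1 - t - Real.sqrt (1 - 6 * t + 5 * t ^ 2)) / (2 * t) - 1
  let f : ℕ × ℕ → ℝ := fun p => (catalan (p.1 + 1) : ℝ) * ((Nat.choose p.2 p.1 : ℝ) * t ^ (p.2 + 1))
  have hf1 : ∀ k, HasSum (fun j => f (k, j)) ((catalan (k + 1) : ℝ) * (t / (1 - t)) ^ (k + 1)) :=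
    fun k => (choose_hasSum k t ht0 (by linarith)).mul_left _
  have hfs : Summable f := by
    rw [summable_prod_of_nonneg (fun p => by simp only [f, Pi.zero_apply]; positivity)]
    refine ⟨fun k => (hf1 k).summable, ?_⟩
    simp_rw [fun k => (hf1 k).tsum_eq]
    exact hC.summable
  have hfV : HasSum f V := by
    have := hfs.hasSum.prod_fiberwise hf1
    rw [hC.unique this]
    exact hfs.hasSum
  have hsw : HasSum (fun p : ℕ × ℕ => f p.swap) V := (Equiv.prodComm ℕ ℕ).hasSum_iff.mpr hfV
  refine hsw.prod_fiberwise fun j => ?_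
  have e : a (j + 1) * t ^ (j + 1) = ∑ k ∈ Finset.range (j + 1), f (k, j) := by
    have hI : Finset.Icc 1 (j + 1) = Finset.Ico (0 + 1) (j + 1 + 1) := by ext; simp
    rw [ha (j + 1) (by omega), Finset.sum_mul, hI, ← Finset.sum_Ico_add', Finset.range_eq_Ico]
    apply Finset.sum_congr rfl
    intro k _
    rw [cat_real]
    simp only [f, Nat.add_sub_cancel]
    ring
  rw [e]
  apply hasSum_sum_of_ne_finset_zero
  intro k hk
  have : j < k := by simpa using hk
  simp [f, Nat.choose_eq_zero_of_lt this]
end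

section
/- Define a_0 = 1 and, for n ≥ 1, a_n = Σ_{m=1}^{n} C(n−1, m−1)·Cat_m, where Cat_m = C(2m, m)/(m+1) is the m-th Catalan number. Then a_n ∼ (1/2)·√(5/π)·5ⁿ·n^{−3/2} as n → ∞; that is, the limit as n → ∞ of a_n · n^{3/2} / 5ⁿ equals (1/2)·√(5/π). -/
open MeasureTheory Filter Set intervalIntegral in
lemma aux_beta (m : ℕ) :
    ∫ s in (0:ℝ)..1, √s * √(1 - s) * (1 - s) ^ m =
      Real.Gamma (3 / 2) * Real.Gamma (m + 3 / 2) / Real.Gamma (m + 3) := by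
  have h := Complex.betaIntegral_eq_Gamma_mul_div (3 / 2 : ℝ) ((m : ℝ) + 3 / 2 : ℝ)
    (by simp) (by simp; positivity)
  rw [← Complex.ofReal_add, Complex.Gamma_ofReal, Complex.Gamma_ofReal, Complex.Gamma_ofReal,
    show (3 / 2 : ℝ) + (m + 3 / 2) = m + 3 by ring] at h
  apply Complex.ofReal_injective
  push_cast
  rw [← h, Complex.betaIntegral, ← intervalIntegral.integral_ofReal]
  apply intervalIntegral.integral_congr
  intro s hs
  rw [uIcc_of_le zero_le_one] at hs
  have h1 : 0 ≤ 1 - s := by linarith [hs.2]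
  have e : (1 - s) ^ ((m : ℝ) + 3 / 2 - 1) = √(1 - s) * (1 - s) ^ m := by
    rw [Real.sqrt_eq_rpow, ← Real.rpow_natCast, ← Real.rpow_add_of_nonneg h1 (by norm_num) (by positivity)]
    congr 1; ring
  have e2 : s ^ ((3 : ℝ) / 2 - 1) = √s := by
    rw [Real.sqrt_eq_rpow]; norm_num
  simp only
  rw [mul_assoc, ← e, ← e2, Complex.ofReal_mul, Complex.ofReal_cpow hs.1, Complex.ofReal_cpow h1]
  push_cast
  rfl

lemma aux_cat (m : ℕ) :
    (8 * 4 ^ m / Real.pi) * (Real.Gamma (3 / 2) * Real.Gamma (m + 3 / 2) / Real.Gamma (m + 3)) =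
      (Nat.choose (2 * (m + 1)) (m + 1) : ℝ) / ((m : ℝ) + 2) := by
  induction m with
  | zero =>
    have h1 : Real.Gamma (3 / 2) = √Real.pi / 2 := by
      rw [show (3 / 2 : ℝ) = 1 / 2 + 1 by norm_num, Real.Gamma_add_one (by norm_num),
        Real.Gamma_one_half_eq]; ring
    have h2 : Real.Gamma 3 = 2 := by
      have := Real.Gamma_nat_eq_factorial 2
      rw [show ((2 : ℕ) : ℝ) + 1 = 3 by norm_num] at this
      rw [this]; norm_num [Nat.factorial]
    have h3 := Real.mul_self_sqrt Real.pi_pos.le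
    have := Real.pi_pos
    simp only [Nat.cast_zero, zero_add, h1, h2]
    norm_num
    field_simp
    nlinarith
  | succ m ih =>
    have hc := Nat.succ_mul_centralBinom_succ (m + 1)
    simp only [Nat.centralBinom] at hc
    have hc' : ((m : ℝ) + 2) * (Nat.choose (2 * (m + 1 + 1)) (m + 1 + 1) : ℝ) =
      2 * (2 * (m + 1) + 1) * (Nat.choose (2 * (m + 1)) (m + 1) : ℝ) := by
      have := congrArg (Nat.cast : ℕ → ℝ) hc
      push_cast at this
      linear_combination this
    have g1 : Real.Gamma ((m + 1 : ℕ) + 3 / 2) = (m + 3 / 2) * Real.Gamma (m + 3 / 2) := by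
      rw [← Real.Gamma_add_one (by positivity)]; push_cast; congr 1; ring
    have g2 : Real.Gamma ((m + 1 : ℕ) + 3) = (m + 3) * Real.Gamma (m + 3) := by
      rw [← Real.Gamma_add_one (by positivity)]; push_cast; congr 1; ring
    rw [g1, g2]
    have hG : Real.Gamma ((m : ℝ) + 3) ≠ 0 := (Real.Gamma_pos_of_pos (by positivity)).ne'
    have hm2 : (m : ℝ) + 2 ≠ 0 := by positivity
    have hm3 : (m : ℝ) + 3 ≠ 0 := by positivity
    have e : (Nat.choose (2 * (m + 1 + 1)) (m + 1 + 1) : ℝ) =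
      2 * (2 * (m + 1) + 1) * ((Nat.choose (2 * (m + 1)) (m + 1) : ℝ) / (m + 2)) := by
      field_simp; linear_combination hc'
    rw [e, ← ih]
    have := Real.pi_pos.ne'
    push_cast
    rw [show (m : ℝ) + 1 + 2 = m + 3 by ring]
    field_simp
    ring

open MeasureTheory Filter Set intervalIntegral in
lemma aux_int (N : ℕ) :
    ∑ m ∈ Finset.Icc 1 (N + 1),
        (Nat.choose (N + 1 - 1) (m - 1) : ℝ) * ((Nat.choose (2 * m) m : ℝ) / (m + 1)) =
      8 / Real.pi * ∫ s in (0:ℝ)..1, √s * √(1 - s) * (5 - 4 * s) ^ N := by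
  have e : ∀ s : ℝ, √s * √(1 - s) * (5 - 4 * s) ^ N =
      ∑ k ∈ Finset.range (N + 1), (4 ^ k * (N.choose k : ℝ)) * (√s * √(1 - s) * (1 - s) ^ k) := by
    intro s
    rw [show 5 - 4 * s = 4 * (1 - s) + 1 by ring, add_pow, Finset.mul_sum]
    refine Finset.sum_congr rfl fun k _ => ?_
    rw [mul_pow]; ring
  simp_rw [e]
  rw [intervalIntegral.integral_finsetSum]
  · have hr : Finset.Icc 1 (N + 1) = Finset.Ico (0 + 1) (N + 1 + 1) := by
      ext x; simp
    rw [Finset.mul_sum, hr, ← Finset.sum_Ico_add', ← Finset.range_eq_Ico]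
    refine Finset.sum_congr rfl fun k _ => ?_
    rw [intervalIntegral.integral_const_mul, aux_beta]
    have h := aux_cat k
    simp only [Nat.add_sub_cancel]
    push_cast
    rw [show (k : ℝ) + 1 + 1 = k + 2 by ring, ← h]
    ring
  · intro k _
    apply Continuous.intervalIntegrable
    fun_prop

open MeasureTheory Filter Set intervalIntegral in
lemma aux_scale (N : ℕ) :
    (8 / Real.pi * ∫ s in (0:ℝ)..1, √s * √(1 - s) * (5 - 4 * s) ^ N) *
      ((N + 1 : ℕ) : ℝ) ^ ((3 : ℝ) / 2) / 5 ^ (N + 1) =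
    8 / (5 * Real.pi) * ∫ u in Ioi (0:ℝ), (Ioc 0 ((N : ℝ) + 1)).indicator
      (fun u => √u * √(1 - u / (N + 1)) * (1 - 4 / 5 * u / (N + 1)) ^ N) u := by
  have hN : (0:ℝ) < (N : ℝ) + 1 := by positivity
  rw [setIntegral_indicator measurableSet_Ioc, inter_eq_right.2 Ioc_subset_Ioi_self,
    ← intervalIntegral.integral_of_le hN.le]
  have h := intervalIntegral.integral_comp_div (a := 0) (b := (N : ℝ) + 1)
    (fun s => √s * √(1 - s) * (5 - 4 * s) ^ N) hN.ne'
  rw [zero_div, div_self hN.ne', smul_eq_mul] at h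
  have h2 : ∀ u : ℝ, √(u / (N + 1)) * √(1 - u / (N + 1)) * (5 - 4 * (u / (N + 1))) ^ N =
      (5 ^ N / √((N : ℝ) + 1)) * (√u * √(1 - u / (N + 1)) * (1 - 4 / 5 * u / (N + 1)) ^ N) := by
    intro u
    rw [show 5 - 4 * (u / ((N : ℝ) + 1)) = 5 * (1 - 4 / 5 * u / (N + 1)) by ring, mul_pow,
      Real.sqrt_div' _ hN.le]
    ring
  simp_rw [h2] at h
  rw [intervalIntegral.integral_const_mul] at h
  have h3 : ((N + 1 : ℕ) : ℝ) ^ ((3 : ℝ) / 2) = ((N : ℝ) + 1) * √((N : ℝ) + 1) := by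
    rw [show (3 : ℝ) / 2 = 1 + 1 / 2 by norm_num]
    push_cast
    rw [Real.rpow_add hN, Real.rpow_one, Real.sqrt_eq_rpow]
  rw [h3]
  have hs : √((N : ℝ) + 1) ≠ 0 := (Real.sqrt_pos.2 hN).ne'
  have := Real.pi_pos.ne'
  generalize (∫ s in (0:ℝ)..1, √s * √(1 - s) * (5 - 4 * s) ^ N) = A at *
  generalize (∫ u in (0:ℝ)..((N:ℝ) + 1), √u * √(1 - u / (N + 1)) * (1 - 4 / 5 * u / (N + 1)) ^ N) = B at *
  have hA : A = (5 ^ N / √((N : ℝ) + 1)) * B / (N + 1) := by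
    rw [h]; field_simp
  rw [hA]
  field_simp
  ring

open MeasureTheory Filter Set Topology in
lemma aux_lim :
    Tendsto (fun N : ℕ => ∫ u in Ioi (0:ℝ), (Ioc 0 ((N : ℝ) + 1)).indicator
      (fun u => √u * √(1 - u / (N + 1)) * (1 - 4 / 5 * u / (N + 1)) ^ N) u) atTop
      (𝓝 (∫ u in Ioi (0:ℝ), √u * Real.exp (-(4 / 5 * u)))) := by
  apply tendsto_integral_filter_of_dominated_convergence
    (fun u => √u * Real.exp (-(2 / 5 * u)))
  · refine Eventually.of_forall fun N => ?_
    exact (Measurable.indicator (by fun_prop) measurableSet_Ioc).aestronglyMeasurable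
  · filter_upwards [eventually_ge_atTop 1] with N hN
    refine (ae_restrict_iff' measurableSet_Ioi).2 (Eventually.of_forall fun u hu => ?_)
    have hN' : (1:ℝ) ≤ N := by exact_mod_cast hN
    have hu0 : 0 < u := hu
    by_cases hm : u ∈ Ioc 0 ((N : ℝ) + 1)
    · rw [indicator_of_mem hm]
      have hq : u / (N + 1) ≤ 1 := (div_le_one (by positivity)).2 hm.2
      have hq0 : 0 ≤ u / (N + 1) := by positivity
      have e0 : 4 / 5 * u / ((N : ℝ) + 1) = 4 / 5 * (u / (N + 1)) := by ring
      have h0 : 0 ≤ 1 - 4 / 5 * u / ((N : ℝ) + 1) := by rw [e0]; linarith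
      rw [Real.norm_of_nonneg (by positivity), mul_assoc]
      gcongr
      have h1 : √(1 - u / (N + 1)) ≤ 1 := Real.sqrt_le_one.2 (by linarith)
      have h2 : (1 - 4 / 5 * u / ((N : ℝ) + 1)) ^ N ≤ Real.exp (-(2 / 5 * u)) := by
        calc _ ≤ (Real.exp (-(4 / 5 * u / ((N : ℝ) + 1)))) ^ N := by
              gcongr
              exact Real.one_sub_le_exp_neg _
          _ = Real.exp (N * -(4 / 5 * u / ((N : ℝ) + 1))) := (Real.exp_nat_mul _ _).symm
          _ ≤ _ := by
              apply Real.exp_le_exp.2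
              have : u / 2 ≤ N * (u / (N + 1)) := by
                rw [← mul_div_assoc, div_le_div_iff₀ (by norm_num) (by positivity)]
                nlinarith
              rw [e0]; linarith
      calc _ ≤ 1 * Real.exp (-(2 / 5 * u)) := mul_le_mul h1 h2 (by positivity) (by norm_num)
        _ = _ := one_mul _
    · rw [indicator_of_notMem hm, norm_zero]; positivity
  · have := integrableOn_rpow_mul_exp_neg_mul_rpow (p := 1) (s := 1 / 2) (b := 2 / 5)
      (by norm_num) (by norm_num) (by norm_num)
    simp only [Real.rpow_one, ← Real.sqrt_eq_rpow, neg_mul] at this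
    exact this
  · refine (ae_restrict_iff' measurableSet_Ioi).2 (Eventually.of_forall fun u hu => ?_)
    have hu0 : 0 < u := hu
    have t0 : Tendsto (fun N : ℕ => (N : ℝ) + 1) atTop atTop :=
      tendsto_atTop_add_const_right _ _ tendsto_natCast_atTop_atTop
    have t1 : Tendsto (fun N : ℕ => √(1 - u / ((N : ℝ) + 1))) atTop (𝓝 1) := by
      have := (tendsto_const_nhds (x := (1:ℝ))).sub (t0.const_div_atTop u)
      simpa using this.sqrt
    have t2 : Tendsto (fun N : ℕ => 1 - 4 / 5 * u / ((N : ℝ) + 1)) atTop (𝓝 1) := by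
      have := (tendsto_const_nhds (x := (1:ℝ))).sub (t0.const_div_atTop (4 / 5 * u))
      simpa using this
    have t3 : Tendsto (fun N : ℕ => (1 - 4 / 5 * u / ((N : ℝ) + 1)) ^ (N + 1)) atTop
        (𝓝 (Real.exp (-(4 / 5 * u)))) := by
      have := (Real.tendsto_one_add_div_pow_exp (-(4 / 5 * u))).comp (tendsto_add_atTop_nat 1)
      refine this.congr fun N => ?_
      simp only [Function.comp]
      push_cast
      congr 1; ring
    have t4 : Tendsto (fun N : ℕ => (1 - 4 / 5 * u / ((N : ℝ) + 1)) ^ N) atTop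
        (𝓝 (Real.exp (-(4 / 5 * u)))) := by
      have := t3.div t2 one_ne_zero
      rw [div_one] at this
      refine this.congr' ?_
      filter_upwards [t2.eventually_ne one_ne_zero] with N hN
      simp only [Pi.div_apply]
      rw [pow_succ, mul_div_assoc, div_self hN, mul_one]
    have t5 := ((tendsto_const_nhds (x := √u)).mul t1).mul t4
    rw [mul_one] at t5
    refine t5.congr' ?_
    filter_upwards [t0.eventually_ge_atTop u] with N hN
    have hm : u ∈ Ioc 0 ((N : ℝ) + 1) := ⟨hu0, hN⟩
    rw [indicator_of_mem hm]

/-- Asymptotics of the number of edge-rooted weighted bicolored plane trees: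
`a_n ∼ (1/2)·√(5/π)·5ⁿ·n^{-3/2}`. -/
theorem stmt13 (a : ℕ → ℝ) (ha0 : a 0 = 1)
    (ha : ∀ n : ℕ, 1 ≤ n →
      a n = ∑ m ∈ Finset.Icc 1 n,
        (Nat.choose (n - 1) (m - 1) : ℝ) * ((Nat.choose (2 * m) m : ℝ) / (m + 1))) :
    Filter.Tendsto (fun n : ℕ => a n * (n : ℝ) ^ ((3 : ℝ) / 2) / 5 ^ n)
      Filter.atTop (nhds ((1 / 2) * Real.sqrt (5 / Real.pi))) := by
  rw [← Filter.tendsto_add_atTop_iff_nat 1]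
  have key := aux_lim.const_mul (8 / (5 * Real.pi))
  have hval : 8 / (5 * Real.pi) * (∫ u in Set.Ioi (0:ℝ), √u * Real.exp (-(4 / 5 * u))) =
      (1 / 2) * Real.sqrt (5 / Real.pi) := by
    have h := Real.integral_rpow_mul_exp_neg_mul_Ioi (a := 3 / 2) (r := 4 / 5)
      (by norm_num) (by norm_num)
    rw [show (3 / 2 - 1 : ℝ) = 1 / 2 by norm_num] at h
    simp only [← Real.sqrt_eq_rpow] at h
    rw [h]
    have h1 : Real.Gamma (3 / 2) = √Real.pi / 2 := by
      rw [show (3 / 2 : ℝ) = 1 / 2 + 1 by norm_num, Real.Gamma_add_one (by norm_num),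
        Real.Gamma_one_half_eq]; ring
    have h2 : (1 / (4 / 5) : ℝ) ^ (3 / 2 : ℝ) = 5 / 4 * (√5 / 2) := by
      rw [show (3 : ℝ) / 2 = 1 + 1 / 2 by norm_num, Real.rpow_add (by norm_num), Real.rpow_one,
        ← Real.sqrt_eq_rpow, show (1 / (4 / 5) : ℝ) = 5 / 2 ^ 2 by norm_num,
        Real.sqrt_div' _ (by norm_num), Real.sqrt_sq (by norm_num)]
      norm_num
    rw [h1, h2, Real.sqrt_div' _ Real.pi_pos.le]
    have h3 := Real.sq_sqrt Real.pi_pos.le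
    have h4 := (Real.sqrt_pos.2 Real.pi_pos).ne'
    have h5 := Real.pi_pos.ne'
    field_simp
    rw [h3]
    ring
  rw [hval] at key
  refine key.congr fun N => ?_
  rw [← aux_scale, ha (N + 1) (by omega), aux_int]
end
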